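/- Let k ∈ ℤ≥0 and let F be a linearly closed differential field of characteristic zero. Let K be an ℓ×ℓ matrix differential operator over F of order N with invertible leading coefficient. Then for every totally skewsymmetric k-differential operator S on F^ℓ there exists a skewsymmetric k-differential operator P on F^ℓ such that ⟨K∘P⟩⁻ = S. -/

import Mathlib

/-- A derivation on a field: an additive map satisfying the Leibniz rule. -/
structure IsDerivation {F : Type*} [Field F] (d : F → F) : Prop where
  map_add : ∀ a b : F, d (a + b) = d a + d b
  leibniz : ∀ a b : F, d (a * b) = d a * b + a * d b

/-- A differential field `(F, d)` is linearly closed if every linear differential equation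
`a_M d^M u + ⋯ + a_1 d u + a_0 u = b` with `a_M ≠ 0` has a solution in `F`,
and has a nonzero solution for `b = 0`, provided that `M ≥ 1`. -/
def LinearlyClosed {F : Type*} [Field F] (d : F → F) : Prop :=
  ∀ (M : ℕ) (a : ℕ → F), a M ≠ 0 →
    (∀ b : F, ∃ u : F, ∑ n ∈ Finset.range (M + 1), a n * d^[n] u = b) ∧
    (1 ≤ M → ∃ u : F, u ≠ 0 ∧ ∑ n ∈ Finset.range (M + 1), a n * d^[n] u = 0)

/-- The derivation `∂̂` of `F[λ_1,…,λ_k]` acting as `d` on coefficients and annihilating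
the variables. -/
noncomputable def coeffDer {F : Type*} [Field F] (d : F → F) {k : ℕ}
    (Q : MvPolynomial (Fin k) F) : MvPolynomial (Fin k) F :=
  ∑ m ∈ Q.support, (MvPolynomial.monomial m) (d (MvPolynomial.coeff m Q))

/-- `Λ₀(Q) = −(λ_1+⋯+λ_k)·Q − ∂̂(Q)`. -/
noncomputable def lamZero {F : Type*} [Field F] (d : F → F) {k : ℕ} :
    MvPolynomial (Fin k) F → MvPolynomial (Fin k) F :=
  fun Q => -((∑ a : Fin k, MvPolynomial.X a) * Q) - coeffDer d Q

/-- `E(Q) = (λ_1+⋯+λ_k)·Q + ∂̂(Q)`. -/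
noncomputable def eOp {F : Type*} [Field F] (d : F → F) {k : ℕ} :
    MvPolynomial (Fin k) F → MvPolynomial (Fin k) F :=
  fun Q => (∑ a : Fin k, MvPolynomial.X a) * Q + coeffDer d Q

/-- A `k`-differential operator on `F^ℓ` is skewsymmetric if the simultaneous action of
`S_k` on the indices `i_1,…,i_k` and the variables `λ_1,…,λ_k` is by the sign
character. -/
def IsSkewsym {F : Type*} [Field F] {k l : ℕ}
    (P : (Fin (k + 1) → Fin l) → MvPolynomial (Fin k) F) : Prop :=
  ∀ (σ : Equiv.Perm (Fin k)) (i : Fin (k + 1) → Fin l),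
    MvPolynomial.rename σ (P (Fin.cons (i 0) (fun a => i (Fin.succ (σ a)))))
      = (Equiv.Perm.sign σ : ℤ) • P i

/-- The operation `P ↦ P^{τ_α}`: expand `P_{i_α,i_1,…,i_0,…,i_k} = Σ_n p_n λ^n` and
replace the power `λ_α^{n_α}` by an application of `Λ₀^{n_α}`. -/
noncomputable def tauAct {F : Type*} [Field F] (d : F → F) {k l : ℕ} (α : Fin k)
    (P : (Fin (k + 1) → Fin l) → MvPolynomial (Fin k) F)
    (i : Fin (k + 1) → Fin l) : MvPolynomial (Fin k) F :=
  ∑ m ∈ (P (fun j => i (Equiv.swap 0 α.succ j))).support,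
    (lamZero d)^[m α]
      ((MvPolynomial.monomial (Finsupp.erase α m))
        (MvPolynomial.coeff m (P (fun j => i (Equiv.swap 0 α.succ j)))))

/-- The total skewsymmetrization `⟨P⟩⁻ = (1/(k+1)) (P − Σ_{α=1}^k P^{τ_α})` of a
skewsymmetric `k`-differential operator. -/
noncomputable def totSkew {F : Type*} [Field F] (d : F → F) {k l : ℕ}
    (P : (Fin (k + 1) → Fin l) → MvPolynomial (Fin k) F) :
    (Fin (k + 1) → Fin l) → MvPolynomial (Fin k) F :=
  fun i => (((k : F) + 1)⁻¹) • (P i - ∑ α : Fin k, tauAct d α P i)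

/-- `(K∘P)_{i_0,i_1,…,i_k} = Σ_j Σ_{n=0}^N K_{i_0 j,n} · E^n (P_{j,i_1,…,i_k})`. -/
noncomputable def kCirc {F : Type*} [Field F] (d : F → F) {k l : ℕ} (N : ℕ)
    (K : Fin l → Fin l → ℕ → F)
    (P : (Fin (k + 1) → Fin l) → MvPolynomial (Fin k) F) :
    (Fin (k + 1) → Fin l) → MvPolynomial (Fin k) F :=
  fun i => ∑ j : Fin l, ∑ n ∈ Finset.range (N + 1),
    MvPolynomial.C (K (i 0) j n) * (eOp d)^[n] (P (Function.update i 0 j))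

section Aux

open MvPolynomial

theorem IsDerivation.d_zero {F : Type*} [Field F] {d : F → F} (hd : IsDerivation d) : d 0 = 0 := by
  have := hd.map_add 0 0
  simpa using this

theorem IsDerivation.d_one {F : Type*} [Field F] {d : F → F} (hd : IsDerivation d) : d 1 = 0 := by
  have := hd.leibniz 1 1
  simpa using this

/-- Horner form of the adjoint operator. -/
def adjOp {F : Type*} [Field F] (d : F → F) : ℕ → (ℕ → F) → F → F
  | 0, a, y => a 0 * y
  | M + 1, a, y => a 0 * y - d (adjOp d M (fun n => a (n + 1)) y)

theorem d_sum {F : Type*} [Field F] {d : F → F} (hd : IsDerivation d) {ι : Type*}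
    (s : Finset ι) (f : ι → F) : d (∑ i ∈ s, f i) = ∑ i ∈ s, d (f i) := by
  exact map_sum (AddMonoidHom.mk' d hd.map_add) f s

theorem adjOp_coeff {F : Type*} [Field F] {d : F → F} (hd : IsDerivation d) (M : ℕ) :
    ∀ (a : ℕ → F), a M ≠ 0 → ∃ c : ℕ → F, c M ≠ 0 ∧
      ∀ y, adjOp d M a y = ∑ n ∈ Finset.range (M + 1), c n * d^[n] y := by
  induction M with
  | zero => intro a ha; exact ⟨a, ha, fun y => by simp [adjOp]⟩
  | succ M ih =>
    intro a ha
    obtain ⟨c, hc, h⟩ := ih (fun n => a (n + 1)) ha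
    refine ⟨fun n => (if n = 0 then a 0 else - c (n - 1)) - (if n ≤ M then d (c n) else 0),
      by simpa using hc, fun y => ?_⟩
    simp only [adjOp, h, d_sum hd, hd.leibniz, sub_mul, Finset.sum_sub_distrib,
      Finset.sum_add_distrib]
    rw [Finset.sum_range_succ' (fun n => (if n = 0 then a 0 else - c (n - 1)) * d^[n] y),
      Finset.sum_range_succ (fun n => (if n ≤ M then d (c n) else 0) * d^[n] y)]
    have h1 : ∑ n ∈ Finset.range (M + 1), (if n ≤ M then d (c n) else 0) * d^[n] y
        = ∑ n ∈ Finset.range (M + 1), d (c n) * d^[n] y := by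
      refine Finset.sum_congr rfl fun n hn => ?_
      rw [if_pos (by simpa [Nat.lt_succ_iff] using hn)]
    rw [h1]
    simp [Function.iterate_succ_apply']
    ring

theorem surj_aux {F : Type*} [Field F] {d : F → F} {V : Type*} [AddCommGroup V] [Module F V]
    (δ : V →+ V) (hδ : ∀ (f : F) v, δ (f • v) = d f • v + f • δ v) (M : ℕ) :
    ∀ (a : ℕ → F) (y : F) (v : V), ∃ u, adjOp d M a y • v
      = δ u + ∑ n ∈ Finset.range (M + 1), (y * a n) • δ^[n] v := by
  induction M with
  | zero => intro a y v; exact ⟨0, by simp [adjOp, mul_comm]⟩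
  | succ M ih =>
    intro a y v
    obtain ⟨u, hu⟩ := ih (fun n => a (n + 1)) y (δ v)
    refine ⟨u - adjOp d M (fun n => a (n + 1)) y • v, ?_⟩
    rw [Finset.sum_range_succ', map_sub, hδ, hu]
    simp only [adjOp, sub_smul, Function.iterate_succ_apply, mul_comm y (a 0)]
    simp
    abel

theorem surj_mod {F : Type*} [Field F] {d : F → F} (hd : IsDerivation d)
    (hlc : LinearlyClosed d) {V : Type*} [AddCommGroup V] [Module F V]
    (δ : V →+ V) (hδ : ∀ (f : F) v, δ (f • v) = d f • v + f • δ v)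
    (W : Submodule F V) [Module.Finite F (V ⧸ W)] (v : V) :
    ∃ u, ∃ w ∈ W, v = δ u + w := by
  have hnl : ¬ LinearIndependent F (fun n : ℕ => W.mkQ (δ^[n] v)) := by
    intro h
    exact Infinite.not_finite (h.finite)
  rw [linearIndependent_iff] at hnl
  push Not at hnl
  obtain ⟨g, hg0, hg⟩ := hnl
  have hne : g.support.Nonempty := Finsupp.support_nonempty_iff.mpr hg
  set M := g.support.max' hne with hM
  have hgM : g M ≠ 0 := Finsupp.mem_support_iff.mp (Finset.max'_mem _ _)
  have hrel : ∑ n ∈ Finset.range (M + 1), g n • δ^[n] v ∈ W := by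
    rw [← Submodule.Quotient.mk_eq_zero, ← Submodule.mkQ_apply, map_sum]
    rw [Finsupp.linearCombination_apply, Finsupp.sum] at hg0
    rw [← hg0]
    symm
    simp only [map_smul]
    refine Finset.sum_subset ?_ ?_
    · intro n hn
      have := Finset.le_max' _ n hn
      simp; omega
    · intro n _ hn
      rw [Finsupp.notMem_support_iff.mp hn, zero_smul]
  obtain ⟨c, hc, h⟩ := adjOp_coeff hd M g hgM
  obtain ⟨y, hy⟩ := (hlc M c hc).1 1
  obtain ⟨u, hu⟩ := surj_aux δ hδ M g y v
  refine ⟨u, _, W.smul_mem y hrel, ?_⟩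
  rw [h, hy, one_smul] at hu
  rw [Finset.smul_sum]
  simpa [mul_smul] using hu

/-! polynomial part -/

theorem coeff_coeffDer {F : Type*} [Field F] {d : F → F} (hd : IsDerivation d) {k : ℕ}
    (Q : MvPolynomial (Fin k) F) (m : Fin k →₀ ℕ) :
    coeff m (coeffDer d Q) = d (coeff m Q) := by
  classical
  rw [coeffDer, coeff_sum]
  simp only [coeff_monomial]
  rw [Finset.sum_ite_eq']
  split_ifs with h
  · rfl
  · rw [notMem_support_iff.mp h, hd.d_zero]

/-- additive version -/
noncomputable def cD {F : Type*} [Field F] {d : F → F} (hd : IsDerivation d) (k : ℕ) :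
    MvPolynomial (Fin k) F →+ MvPolynomial (Fin k) F :=
  AddMonoidHom.mk' (coeffDer d) (by
    intro a b; ext m; simp [coeff_coeffDer hd, hd.map_add])

theorem cD_apply {F : Type*} [Field F] {d : F → F} (hd : IsDerivation d) {k : ℕ}
    (Q : MvPolynomial (Fin k) F) : coeffDer d Q = cD hd k Q := rfl

theorem cD_monomial {F : Type*} [Field F] {d : F → F} (hd : IsDerivation d) {k : ℕ}
    (m : Fin k →₀ ℕ) (c : F) : cD hd k (monomial m c) = monomial m (d c) := by
  classical
  ext n
  rw [← cD_apply, coeff_coeffDer hd, coeff_monomial, coeff_monomial]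
  split_ifs <;> simp [hd.d_zero]

theorem cD_mul {F : Type*} [Field F] {d : F → F} (hd : IsDerivation d) {k : ℕ}
    (P Q : MvPolynomial (Fin k) F) : cD hd k (P * Q) = cD hd k P * Q + P * cD hd k Q := by
  induction P using MvPolynomial.induction_on' with
  | add p q hp hq => simp only [add_mul, map_add, hp, hq]; ring
  | monomial m c =>
    induction Q using MvPolynomial.induction_on' with
    | add p q hp hq => simp only [mul_add, map_add, hp, hq]; ring
    | monomial n e => simp [monomial_mul, cD_monomial, hd.leibniz]

theorem cD_X {F : Type*} [Field F] {d : F → F} (hd : IsDerivation d) {k : ℕ} (a : Fin k) :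
    cD hd k (X a) = 0 := by
  rw [X, cD_monomial, hd.d_one, map_zero]

theorem cD_one {F : Type*} [Field F] {d : F → F} (hd : IsDerivation d) {k : ℕ} :
    cD hd k 1 = 0 := by
  have := cD_monomial hd (k := k) 0 1
  rw [hd.d_one, map_zero] at this
  exact this

theorem cD_X_pow {F : Type*} [Field F] {d : F → F} (hd : IsDerivation d) {k : ℕ} (a : Fin k)
    (n : ℕ) : cD hd k (X a ^ n) = 0 := by
  rw [X_pow_eq_monomial, cD_monomial, hd.d_one, map_zero]

theorem cD_C {F : Type*} [Field F] {d : F → F} (hd : IsDerivation d) {k : ℕ} (c : F) :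
    cD hd k (C c) = C (d c) := cD_monomial hd 0 c

theorem cD_rename {F : Type*} [Field F] {d : F → F} (hd : IsDerivation d) {k k' : ℕ}
    (f : Fin k → Fin k') (Q : MvPolynomial (Fin k) F) :
    cD hd k' (rename f Q) = rename f (cD hd k Q) := by
  induction Q using MvPolynomial.induction_on' with
  | add p q hp hq => simp only [map_add, hp, hq]
  | monomial m c => simp [rename_monomial, cD_monomial]

/-- additive version of E -/
noncomputable def eH {F : Type*} [Field F] {d : F → F} (hd : IsDerivation d) (k : ℕ) :
    MvPolynomial (Fin k) F →+ MvPolynomial (Fin k) F :=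
  AddMonoidHom.mulLeft (∑ a : Fin k, X a) + cD hd k

theorem eH_apply {F : Type*} [Field F] {d : F → F} (hd : IsDerivation d) {k : ℕ}
    (Q : MvPolynomial (Fin k) F) : eH hd k Q = (∑ a : Fin k, X a) * Q + cD hd k Q := rfl

theorem eOp_eq {F : Type*} [Field F] {d : F → F} (hd : IsDerivation d) {k : ℕ} :
    eOp d (k := k) = eH hd k := rfl

/-- additive version of Λ₀ -/
noncomputable def lH {F : Type*} [Field F] {d : F → F} (hd : IsDerivation d) (k : ℕ) :
    MvPolynomial (Fin k) F →+ MvPolynomial (Fin k) F := - eH hd k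

theorem lH_apply {F : Type*} [Field F] {d : F → F} (hd : IsDerivation d) {k : ℕ}
    (Q : MvPolynomial (Fin k) F) : lH hd k Q = - eH hd k Q := rfl

theorem lamZero_eq {F : Type*} [Field F] {d : F → F} (hd : IsDerivation d) {k : ℕ} :
    lamZero d (k := k) = lH hd k := by
  funext Q
  rw [lH_apply, eH_apply, ← cD_apply, lamZero]
  ring

theorem eH_rename {F : Type*} [Field F] {d : F → F} (hd : IsDerivation d) {k : ℕ}
    (e : Equiv.Perm (Fin k)) (Q : MvPolynomial (Fin k) F) :
    eH hd k (rename e Q) = rename e (eH hd k Q) := by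
  simp only [eH_apply, map_add, map_mul, map_sum, rename_X, cD_rename]
  rw [Equiv.sum_comp e (fun a => (X a : MvPolynomial (Fin k) F))]

theorem eH_iter_rename {F : Type*} [Field F] {d : F → F} (hd : IsDerivation d) {k : ℕ}
    (e : Equiv.Perm (Fin k)) (n : ℕ) (Q : MvPolynomial (Fin k) F) :
    (eH hd k)^[n] (rename e Q) = rename e ((eH hd k)^[n] Q) := by
  have h : Function.Semiconj (rename (R := F) e) (eH hd k) (eH hd k) := fun x => (eH_rename hd e x).symm
  exact (h.iterate_right n Q).symm

theorem lH_iter_rename {F : Type*} [Field F] {d : F → F} (hd : IsDerivation d) {k : ℕ}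
    (e : Equiv.Perm (Fin k)) (n : ℕ) (Q : MvPolynomial (Fin k) F) :
    (lH hd k)^[n] (rename e Q) = rename e ((lH hd k)^[n] Q) := by
  have h : Function.Semiconj (rename (R := F) e) (lH hd k) (lH hd k) := fun x => by
    rw [lH_apply, lH_apply, map_neg, eH_rename]
  exact (h.iterate_right n Q).symm

theorem eH_mul {F : Type*} [Field F] {d : F → F} (hd : IsDerivation d) {k : ℕ}
    (q : MvPolynomial (Fin k) F) (x : MvPolynomial (Fin (k + 1)) F) :
    eH hd (k + 1) (rename Fin.succ q * x)
      = rename Fin.succ q * (X 0 * x + cD hd _ x) + rename Fin.succ (eH hd k q) * x := by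
  simp only [eH_apply, cD_mul, cD_rename, map_add, map_mul, map_sum, rename_X, Fin.sum_univ_succ]
  ring

/-- the projection eliminating λ₀ -/
noncomputable def piH {F : Type*} [Field F] {d : F → F} (hd : IsDerivation d) (k : ℕ) :
    MvPolynomial (Fin (k + 1)) F →+ MvPolynomial (Fin k) F :=
  AddMonoidHom.mk' (fun Q => (finSuccEquiv F k Q).sum (fun n q => (lH hd k)^[n] q)) (by
    intro a b
    rw [map_add, Polynomial.sum_add_index]
    · intro i; exact iterate_map_zero _ _
    · intro i a b; exact iterate_map_add _ _ _ _)

theorem finSuccEquiv_iota {F : Type*} [Field F] {k : ℕ} (q : MvPolynomial (Fin k) F) :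
    finSuccEquiv F k (rename Fin.succ q) = Polynomial.C q := by
  induction q using MvPolynomial.induction_on with
  | C a => simp [finSuccEquiv_apply]
  | add p q hp hq => simp [hp, hq]
  | mul_X p n hp => simp [hp, finSuccEquiv_X_succ]

theorem piH_basic {F : Type*} [Field F] {d : F → F} (hd : IsDerivation d) {k : ℕ} (n : ℕ)
    (q : MvPolynomial (Fin k) F) :
    piH hd k (X 0 ^ n * rename Fin.succ q) = (lH hd k)^[n] q := by
  change (finSuccEquiv F k _).sum _ = _
  rw [map_mul, map_pow, finSuccEquiv_X_zero, finSuccEquiv_iota, mul_comm,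
    Polynomial.C_mul_X_pow_eq_monomial, Polynomial.sum_monomial_index]
  exact iterate_map_zero _ _

theorem piH_iota {F : Type*} [Field F] {d : F → F} (hd : IsDerivation d) {k : ℕ}
    (q : MvPolynomial (Fin k) F) : piH hd k (rename Fin.succ q) = q := by
  simpa using piH_basic hd 0 q

theorem ind_basic {F : Type*} [Field F] {k : ℕ} {p : MvPolynomial (Fin (k + 1)) F → Prop}
    (h1 : ∀ n q, p (X 0 ^ n * rename Fin.succ q)) (h2 : ∀ x y, p x → p y → p (x + y)) (x) :
    p x := by
  have key : ∀ f : Polynomial (MvPolynomial (Fin k) F), p ((finSuccEquiv F k).symm f) := by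
    intro f
    induction f using Polynomial.induction_on' with
    | add a b ha hb => rw [map_add]; exact h2 _ _ ha hb
    | monomial n a =>
      convert h1 n a
      rw [AlgEquiv.symm_apply_eq, map_mul, map_pow, finSuccEquiv_X_zero, finSuccEquiv_iota,
        mul_comm, Polynomial.C_mul_X_pow_eq_monomial]
  simpa using key (finSuccEquiv F k x)

theorem eH_basic {F : Type*} [Field F] {d : F → F} (hd : IsDerivation d) {k : ℕ} (n : ℕ)
    (q : MvPolynomial (Fin k) F) :
    eH hd (k + 1) (X 0 ^ n * rename Fin.succ q)
      = X 0 ^ (n + 1) * rename Fin.succ q + X 0 ^ n * rename Fin.succ (eH hd k q) := by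
  rw [mul_comm, eH_mul, cD_X_pow]; ring

theorem piH_eH {F : Type*} [Field F] {d : F → F} (hd : IsDerivation d) {k : ℕ}
    (x : MvPolynomial (Fin (k + 1)) F) : piH hd k (eH hd (k + 1) x) = 0 := by
  induction x using ind_basic with
  | h1 n q =>
    rw [eH_basic, map_add, piH_basic, piH_basic, Function.iterate_succ_apply, lH_apply,
      iterate_map_neg, neg_add_cancel]
  | h2 x y hx hy => rw [map_add, map_add, hx, hy, add_zero]

theorem exists_eH {F : Type*} [Field F] {d : F → F} (hd : IsDerivation d) {k : ℕ}
    (x : MvPolynomial (Fin (k + 1)) F) :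
    ∃ y, x = rename Fin.succ (piH hd k x) + eH hd (k + 1) y := by
  induction x using ind_basic with
  | h1 n q =>
    rw [piH_basic]
    induction n generalizing q with
    | zero => exact ⟨0, by simp⟩
    | succ n ih =>
      obtain ⟨y, hy⟩ := ih (lH hd k q)
      refine ⟨y + X 0 ^ n * rename Fin.succ q, ?_⟩
      rw [map_add, ← add_assoc, Function.iterate_succ_apply, ← hy, eH_basic, lH_apply, map_neg]
      ring
  | h2 x y hx hy =>
    obtain ⟨a, ha⟩ := hx
    obtain ⟨b, hb⟩ := hy
    refine ⟨a + b, ?_⟩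
    rw [map_add, map_add, map_add, add_add_add_comm, ← ha, ← hb]

/-- extension of a permutation fixing 0 -/
def extP {k : ℕ} (e : Equiv.Perm (Fin k)) : Equiv.Perm (Fin (k + 1)) :=
  Equiv.Perm.decomposeFin.symm (0, e)

theorem extP_zero {k : ℕ} (e : Equiv.Perm (Fin k)) : extP e 0 = 0 := by simp [extP]
theorem extP_succ {k : ℕ} (e : Equiv.Perm (Fin k)) (a : Fin k) :
    extP e a.succ = (e a).succ := by simp [extP]

theorem decomp_eq {k : ℕ} (p : Fin (k + 1)) (e : Equiv.Perm (Fin k)) :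
    Equiv.Perm.decomposeFin.symm (p, e) = Equiv.swap 0 p * extP e := by
  ext x
  refine Fin.cases ?_ (fun a => ?_) x
  · simp [extP_zero]
  · simp [extP_succ]

theorem sign_extP {k : ℕ} (e : Equiv.Perm (Fin k)) :
    Equiv.Perm.sign (extP e) = Equiv.Perm.sign e := by simp [extP]

theorem rename_extP_iota {F : Type*} [Field F] {k : ℕ} (e : Equiv.Perm (Fin k))
    (q : MvPolynomial (Fin k) F) :
    rename (extP e) (rename Fin.succ q) = rename Fin.succ (rename e q) := by
  rw [rename_rename, rename_rename]
  have : (extP e : Fin (k + 1) → Fin (k + 1)) ∘ Fin.succ = Fin.succ ∘ e := funext (extP_succ e)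
  rw [this]

theorem piH_extP {F : Type*} [Field F] {d : F → F} (hd : IsDerivation d) {k : ℕ}
    (e : Equiv.Perm (Fin k)) (x : MvPolynomial (Fin (k + 1)) F) :
    piH hd k (rename (extP e) x) = rename e (piH hd k x) := by
  induction x using ind_basic with
  | h1 n q =>
    rw [map_mul, map_pow, rename_X, extP_zero, rename_extP_iota, piH_basic, piH_basic,
      lH_iter_rename]
  | h2 x y hx hy => rw [map_add, map_add, map_add, map_add, hx, hy]

theorem tau_poly {F : Type*} [Field F] {d : F → F} (hd : IsDerivation d) {k : ℕ}
    (α : Fin k) (Q : MvPolynomial (Fin k) F) :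
    ∑ m ∈ Q.support, (lamZero d)^[m α] (monomial (Finsupp.erase α m) (coeff m Q))
      = piH hd k (rename (Equiv.swap 0 α.succ) (rename Fin.succ Q)) := by
  conv_rhs => rw [Q.as_sum, map_sum, map_sum, map_sum]
  refine Finset.sum_congr rfl fun m _ => ?_
  rw [lamZero_eq hd, ← piH_basic]
  congr 1
  conv_rhs => rw [← Finsupp.single_add_erase α m, ← mul_one (coeff _ Q), mul_comm, ← monomial_mul,
    ← X_pow_eq_monomial]
  rw [map_mul, map_mul, map_pow, map_pow, rename_X, rename_X, Equiv.swap_apply_right, rename_rename]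
  rw [Finsupp.single_add_erase]
  congr 1
  rw [rename_monomial, rename_monomial]
  rw [Finsupp.mapDomain_congr (f := Fin.succ)
    (g := (Equiv.swap 0 α.succ : Fin (k + 1) → Fin (k + 1)) ∘ Fin.succ)]
  intro a ha
  have : a ≠ α := by
    rintro rfl
    simp at ha
  rw [Function.comp_apply, Equiv.swap_apply_of_ne_of_ne (Fin.succ_ne_zero a)
    (fun h => this (Fin.succ_injective _ h))]

/-- k-differential operators -/
abbrev HT (F : Type*) [Field F] (k l : ℕ) := (Fin (k + 1) → Fin l) → MvPolynomial (Fin k) F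
/-- lifted operators -/
abbrev BT (F : Type*) [Field F] (k l : ℕ) := (Fin (k + 1) → Fin l) → MvPolynomial (Fin (k + 1)) F

/-- action on lifted operators -/
noncomputable def actB {F : Type*} [Field F] {k l : ℕ} (σ : Equiv.Perm (Fin (k + 1))) :
    BT F k l →ₗ[F] BT F k l where
  toFun b := fun i => rename σ (b (i ∘ σ))
  map_add' a b := by funext i; simp
  map_smul' a b := by funext i; simp

theorem actB_apply {F : Type*} [Field F] {k l : ℕ} (σ : Equiv.Perm (Fin (k + 1)))
    (b : BT F k l) (i) : actB σ b i = rename σ (b (i ∘ σ)) := rfl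

theorem actB_mul {F : Type*} [Field F] {k l : ℕ} (σ τ : Equiv.Perm (Fin (k + 1)))
    (b : BT F k l) : actB (σ * τ) b = actB σ (actB τ b) := by
  funext i
  simp only [actB_apply, rename_rename]
  rfl

/-- action of S_k -/
noncomputable def actH {F : Type*} [Field F] {k l : ℕ} (σ : Equiv.Perm (Fin k)) :
    HT F k l →ₗ[F] HT F k l where
  toFun P := fun i => rename σ (P (Fin.cons (i 0) (fun a => i (Fin.succ (σ a)))))
  map_add' a b := by funext i; simp
  map_smul' a b := by funext i; simp

theorem actH_apply {F : Type*} [Field F] {k l : ℕ} (σ : Equiv.Perm (Fin k))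
    (P : HT F k l) (i) :
    actH σ P i = rename σ (P (Fin.cons (i 0) (fun a => i (Fin.succ (σ a))))) := rfl

theorem actH_mul {F : Type*} [Field F] {k l : ℕ} (σ τ : Equiv.Perm (Fin k))
    (P : HT F k l) : actH (σ * τ) P = actH σ (actH τ P) := by
  funext i
  simp only [actH_apply, rename_rename]
  rfl

/-- lift -/
noncomputable def iotaB {F : Type*} [Field F] {k l : ℕ} : HT F k l →ₗ[F] BT F k l where
  toFun P := fun i => rename Fin.succ (P i)
  map_add' a b := by funext i; simp
  map_smul' a b := by funext i; simp

theorem iotaB_apply {F : Type*} [Field F] {k l : ℕ} (P : HT F k l) (i) :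
    iotaB P i = rename Fin.succ (P i) := rfl

/-- projection -/
noncomputable def piB {F : Type*} [Field F] {d : F → F} (hd : IsDerivation d) (k l : ℕ) :
    BT F k l →+ HT F k l := (piH hd k).compLeft _

theorem piB_apply {F : Type*} [Field F] {d : F → F} (hd : IsDerivation d) {k l : ℕ}
    (b : BT F k l) (i) : piB hd k l b i = piH hd k (b i) := rfl

/-- total derivative -/
noncomputable def eB {F : Type*} [Field F] {d : F → F} (hd : IsDerivation d) (k l : ℕ) :
    BT F k l →+ BT F k l := (eH hd (k + 1)).compLeft _

theorem eB_apply {F : Type*} [Field F] {d : F → F} (hd : IsDerivation d) {k l : ℕ}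
    (b : BT F k l) (i) : eB hd k l b i = eH hd (k + 1) (b i) := rfl

theorem eB_smul {F : Type*} [Field F] {d : F → F} (hd : IsDerivation d) {k l : ℕ}
    (f : F) (b : BT F k l) : eB hd k l (f • b) = d f • b + f • eB hd k l b := by
  funext i
  simp only [eB_apply, Pi.add_apply, Pi.smul_apply, smul_eq_C_mul, eH_apply, cD_mul, cD_C]
  ring

theorem piB_eB {F : Type*} [Field F] {d : F → F} (hd : IsDerivation d) {k l : ℕ}
    (b : BT F k l) : piB hd k l (eB hd k l b) = 0 := by
  funext i
  exact piH_eH hd _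

theorem piB_iotaB {F : Type*} [Field F] {d : F → F} (hd : IsDerivation d) {k l : ℕ}
    (P : HT F k l) : piB hd k l (iotaB P) = P := by
  funext i
  exact piH_iota hd _

theorem exists_eB {F : Type*} [Field F] {d : F → F} (hd : IsDerivation d) {k l : ℕ}
    (b : BT F k l) : ∃ y, b = iotaB (piB hd k l b) + eB hd k l y := by
  choose y hy using fun i => exists_eH hd (b i)
  exact ⟨y, funext hy⟩

theorem eB_actB {F : Type*} [Field F] {d : F → F} (hd : IsDerivation d) {k l : ℕ}
    (σ : Equiv.Perm (Fin (k + 1))) (b : BT F k l) :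
    eB hd k l (actB σ b) = actB σ (eB hd k l b) := by
  funext i
  exact eH_rename hd σ _

theorem comp_extP {k l : ℕ} (e : Equiv.Perm (Fin k)) (i : Fin (k + 1) → Fin l) :
    i ∘ extP e = Fin.cons (i 0) (fun a => i (Fin.succ (e a))) := by
  funext x
  refine Fin.cases ?_ (fun a => ?_) x
  · simp [extP_zero]
  · simp [extP_succ]

theorem actB_iotaB {F : Type*} [Field F] {k l : ℕ} (e : Equiv.Perm (Fin k)) (P : HT F k l) :
    actB (extP e) (iotaB P) = iotaB (actH e P) := by
  funext i
  rw [actB_apply, iotaB_apply, rename_extP_iota, comp_extP]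
  rfl

theorem piB_actB {F : Type*} [Field F] {d : F → F} (hd : IsDerivation d) {k l : ℕ}
    (e : Equiv.Perm (Fin k)) (b : BT F k l) :
    piB hd k l (actB (extP e) b) = actH e (piB hd k l b) := by
  funext i
  rw [piB_apply, actB_apply, piH_extP, comp_extP]
  rfl

theorem tauAct_eq {F : Type*} [Field F] {d : F → F} (hd : IsDerivation d) {k l : ℕ}
    (α : Fin k) (P : HT F k l) :
    tauAct d α P = piB hd k l (actB (Equiv.swap 0 α.succ) (iotaB P)) := by
  funext i
  exact tau_poly hd α _

theorem piB_act_iota {F : Type*} [Field F] {d : F → F} (hd : IsDerivation d) {k l : ℕ}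
    (σ : Equiv.Perm (Fin (k + 1))) (b : BT F k l) :
    piB hd k l (actB σ b) = piB hd k l (actB σ (iotaB (piB hd k l b))) := by
  obtain ⟨y, hy⟩ := exists_eB hd b
  conv_lhs => rw [hy]
  rw [map_add, map_add, ← eB_actB, piB_eB, add_zero]

/-- additive version of kCirc -/
noncomputable def kCH {F : Type*} [Field F] {d : F → F} (hd : IsDerivation d) (k l N : ℕ)
    (K : Fin l → Fin l → ℕ → F) : HT F k l →+ HT F k l :=
  AddMonoidHom.mk' (kCirc d N K) (by
    intro a b
    funext i
    simp only [kCirc, eOp_eq hd, Pi.add_apply, iterate_map_add, mul_add, Finset.sum_add_distrib])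

theorem kCH_apply {F : Type*} [Field F] {d : F → F} (hd : IsDerivation d) {k l N : ℕ}
    (K : Fin l → Fin l → ℕ → F) (P : HT F k l) (i) : kCH hd k l N K P i =
     ∑ j : Fin l, ∑ n ∈ Finset.range (N + 1),
      MvPolynomial.C (K (i 0) j n) * (eH hd k)^[n] (P (Function.update i 0 j)) := rfl

theorem kCH_actH {F : Type*} [Field F] {d : F → F} (hd : IsDerivation d) {k l N : ℕ}
    (K : Fin l → Fin l → ℕ → F) (e : Equiv.Perm (Fin k)) (P : HT F k l) :
    kCH hd k l N K (actH e P) = actH e (kCH hd k l N K P) := by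
  funext i
  simp only [kCH_apply, actH_apply, eH_iter_rename, map_sum, map_mul, rename_C, Fin.cons_zero,
    Fin.update_cons_zero, Function.update_self, ne_eq, Fin.succ_ne_zero, not_false_eq_true,
    Function.update_of_ne]

/-- the submodule W₀ -/
noncomputable def W0 {F : Type*} [Field F] {d : F → F} (hd : IsDerivation d) (k l N : ℕ)
    (K : Fin l → Fin l → ℕ → F) : Submodule F (BT F k l) where
  carrier := {w | ∀ q : MvPolynomial (Fin k) F,
    piB hd k l (fun i => rename Fin.succ q * w i) ∈ (kCH hd k l N K).range}
  zero_mem' := by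
    intro q
    have : (fun i => rename Fin.succ q * (0 : BT F k l) i) = 0 := by funext i; simp
    rw [this, map_zero]
    exact zero_mem _
  add_mem' := by
    intro a b ha hb q
    have : (fun i => rename Fin.succ q * (a + b) i)
      = (fun i => rename Fin.succ q * a i) + (fun i => rename Fin.succ q * b i) := by
        funext i; simp [mul_add]
    rw [this, map_add]
    exact add_mem (ha q) (hb q)
  smul_mem' := by
    intro c a ha q
    have : (fun i => rename Fin.succ q * (c • a) i)
      = (fun i => rename Fin.succ (q * C c) * a i) := by
        funext i; simp [smul_eq_C_mul, mul_assoc]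
    rw [this]
    exact ha _

theorem mem_W0 {F : Type*} [Field F] {d : F → F} (hd : IsDerivation d) {k l N : ℕ}
    (K : Fin l → Fin l → ℕ → F) (w : BT F k l) : w ∈ W0 hd k l N K ↔
    ∀ q : MvPolynomial (Fin k) F,
      piB hd k l (fun i => rename Fin.succ q * w i) ∈ (kCH hd k l N K).range := Iff.rfl

/-- multiplication by a polynomial -/
noncomputable def mulB {F : Type*} [Field F] {k l : ℕ} (x : MvPolynomial (Fin (k + 1)) F) :
    BT F k l →ₗ[F] BT F k l where
  toFun b := fun i => x * b i
  map_add' a b := by funext i; simp [mul_add]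
  map_smul' a b := by funext i; simp

/-- coefficientwise derivation -/
noncomputable def cB {F : Type*} [Field F] {d : F → F} (hd : IsDerivation d) (k l : ℕ) :
    BT F k l →+ BT F k l := (cD hd (k + 1)).compLeft _

/-- λ₀ + ∂ -/
noncomputable def dB {F : Type*} [Field F] {d : F → F} (hd : IsDerivation d) (k l : ℕ) :
    BT F k l →+ BT F k l := (mulB (X 0)).toAddMonoidHom + cB hd k l

theorem dB_apply {F : Type*} [Field F] {d : F → F} (hd : IsDerivation d) {k l : ℕ}
    (b : BT F k l) (i) : dB hd k l b i = X 0 * b i + cD hd _ (b i) := rfl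

theorem mulB_apply {F : Type*} [Field F] {k l : ℕ} (x : MvPolynomial (Fin (k + 1)) F)
    (b : BT F k l) (i) : mulB x b i = x * b i := rfl

theorem piB_dB {F : Type*} [Field F] {d : F → F} (hd : IsDerivation d) {k l : ℕ}
    (q : MvPolynomial (Fin k) F) (w : BT F k l) :
    piB hd k l (mulB (rename Fin.succ q) (dB hd k l w))
      = - piB hd k l (mulB (rename Fin.succ (eH hd k q)) w) := by
  have h := piB_eB hd (mulB (rename Fin.succ q) w)
  have h2 : eB hd k l (mulB (rename Fin.succ q) w) = mulB (rename Fin.succ q) (dB hd k l w)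
      + mulB (rename Fin.succ (eH hd k q)) w := by
    funext i
    exact eH_mul hd q (w i)
  rw [h2, map_add] at h
  exact eq_neg_of_add_eq_zero_left h

theorem W0_dB {F : Type*} [Field F] {d : F → F} (hd : IsDerivation d) {k l N : ℕ}
    (K : Fin l → Fin l → ℕ → F) (w : BT F k l) (hw : w ∈ W0 hd k l N K) :
    dB hd k l w ∈ W0 hd k l N K := by
  intro q
  have := piB_dB hd q w
  have h2 := neg_mem (hw (eH hd k q))
  exact this ▸ h2

theorem W0_mul {F : Type*} [Field F] {d : F → F} (hd : IsDerivation d) {k l N : ℕ}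
    (K : Fin l → Fin l → ℕ → F) (w : BT F k l) (hw : w ∈ W0 hd k l N K)
    (q : MvPolynomial (Fin k) F) : mulB (rename Fin.succ q) w ∈ W0 hd k l N K := by
  intro p
  have := hw (p * q)
  simpa only [map_mul, mul_assoc, mulB_apply] using this

theorem piB_dB_iter {F : Type*} [Field F] {d : F → F} (hd : IsDerivation d) {k l : ℕ} (n : ℕ)
    (q : MvPolynomial (Fin k) F) (w : BT F k l) :
    piB hd k l (mulB (rename Fin.succ q) ((dB hd k l)^[n] w))
      = (-1 : ℤ) ^ n • piB hd k l (mulB (rename Fin.succ ((eH hd k)^[n] q)) w) := by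
  induction n generalizing q with
  | zero => simp
  | succ n ih =>
    rw [Function.iterate_succ_apply', piB_dB, ih, pow_succ, Function.iterate_succ_apply]
    simp

/-- basic elements of W₀ -/
noncomputable def RB {F : Type*} [Field F] {d : F → F} (hd : IsDerivation d) {k l : ℕ} (N : ℕ)
    (K : Fin l → Fin l → ℕ → F) (i : Fin (k + 1) → Fin l) (j : Fin l) : BT F k l :=
  ∑ n ∈ Finset.range (N + 1), (-1 : ℤ) ^ n • (dB hd k l)^[n]
    (∑ i', Pi.single (Function.update i 0 i') (C (K i' j n)))

theorem single_sum_apply {k l : ℕ} {A : Type*} [AddCommMonoid A] (i : Fin (k + 1) → Fin l)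
    (f : Fin l → A) (i2 : Fin (k + 1) → Fin l) :
    (∑ i', Pi.single (M := fun _ => A) (Function.update i 0 i') (f i')) i2
      = if Function.update i2 0 (i 0) = i then f (i2 0) else 0 := by
  rw [Finset.sum_apply]
  have key : ∀ i', Function.update i 0 i' = i2 ↔ (Function.update i2 0 (i 0) = i ∧ i' = i2 0) := by
    intro i'
    constructor
    · rintro rfl; simp
    · rintro ⟨h, rfl⟩; rw [← h]; simp
  simp only [Pi.single_apply]
  split_ifs with h
  · rw [Finset.sum_eq_single (i2 0)]
    · rw [if_pos]; rw [eq_comm, key]; exact ⟨h, rfl⟩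
    · intro b _ hb
      rw [if_neg]; rw [eq_comm, key]; exact fun h => hb h.2
    · simp
  · apply Finset.sum_eq_zero
    intro b _
    rw [if_neg]; rw [eq_comm, key]; exact fun h2 => h h2.1

theorem RB_mem {F : Type*} [Field F] {d : F → F} (hd : IsDerivation d) {k l : ℕ} (N : ℕ)
    (K : Fin l → Fin l → ℕ → F) (i : Fin (k + 1) → Fin l) (j : Fin l) :
    RB hd N K i j ∈ W0 hd k l N K := by
  intro q
  change piB hd k l (mulB (rename Fin.succ q) (RB hd N K i j)) ∈ _
  refine ⟨Pi.single (Function.update i 0 j) q, ?_⟩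
  rw [RB, map_sum, map_sum]
  simp only [map_zsmul, piB_dB_iter, smul_smul, ← mul_pow]
  simp only [neg_mul_neg, mul_one, one_pow, one_smul]
  funext i2
  rw [kCH_apply, Finset.sum_comm, Finset.sum_apply]
  refine Finset.sum_congr rfl fun n _ => ?_
  rw [piB_apply, mulB_apply, single_sum_apply]
  have h0 : ∀ j', Function.update i2 0 j' = Function.update i 0 j ↔
      (Function.update i2 0 (i 0) = i ∧ j' = j) := by
    intro j'
    constructor
    · intro h
      have h1 : j' = j := by simpa using congrFun h 0
      refine ⟨?_, h1⟩
      have := congrArg (fun f => Function.update f 0 (i 0)) h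
      simpa using this
    · rintro ⟨h, rfl⟩; rw [← h]; simp
  rw [Finset.sum_eq_single j]
  · split_ifs with h
    · have := (h0 j).2 ⟨h, rfl⟩
      rw [this, Pi.single_eq_same]
      have h3 : rename Fin.succ ((eH hd k)^[n] q) * C (K (i2 0) j n)
        = rename Fin.succ (C (K (i2 0) j n) * (eH hd k)^[n] q) := by simp [mul_comm]
      rw [h3, piH_iota]
    · rw [Pi.single_eq_of_ne (fun h2 => h ((h0 j).1 h2).1), iterate_map_zero]
      simp
  · intro b _ hb
    rw [Pi.single_eq_of_ne (fun h2 => hb ((h0 b).1 h2).2), iterate_map_zero, mul_zero]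
  · simp

/-- span of monomials of degree less than D -/
noncomputable def YB (F : Type*) [Field F] (k l D : ℕ) : Submodule F (BT F k l) :=
  Submodule.span F {b | ∃ (i : Fin (k + 1) → Fin l) (m : Fin (k + 1) →₀ ℕ),
    Finsupp.degree m < D ∧ b = Pi.single i (monomial m 1)}

theorem single_smul_mono {F : Type*} [Field F] {k l : ℕ} (i : Fin (k + 1) → Fin l) (m)
    (c : F) : (Pi.single i (monomial m c) : BT F k l) = c • Pi.single i (monomial m 1) := by
  rw [← Pi.single_smul, smul_monomial, smul_eq_mul, mul_one]

theorem YB_single {F : Type*} [Field F] {k l D : ℕ} (i : Fin (k + 1) → Fin l) (m) (c : F)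
    (h : Finsupp.degree m < D) : (Pi.single i (monomial m c) : BT F k l) ∈ YB F k l D := by
  rw [single_smul_mono]
  exact Submodule.smul_mem _ _ (Submodule.subset_span ⟨i, m, h, rfl⟩)

theorem YB_mono {F : Type*} [Field F] {k l D D' : ℕ} (h : D ≤ D') : YB F k l D ≤ YB F k l D' :=
  Submodule.span_mono (by rintro b ⟨i, m, h1, h2⟩; exact ⟨i, m, by omega, h2⟩)

theorem mulB_X_single {F : Type*} [Field F] {k l : ℕ} (a) (i : Fin (k + 1) → Fin l) (m)
    (c : F) : mulB (X a) (Pi.single i (monomial m c) : BT F k l)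
      = Pi.single i (monomial (m + Finsupp.single a 1) c) := by
  funext j
  rw [mulB_apply, Pi.single_apply, Pi.single_apply]
  split_ifs
  · rw [X, monomial_mul, one_mul, add_comm m]
  · simp

theorem cB_single {F : Type*} [Field F] {d : F → F} (hd : IsDerivation d) {k l : ℕ}
    (i : Fin (k + 1) → Fin l) (m) (c : F) :
    cB hd k l (Pi.single i (monomial m c) : BT F k l) = Pi.single i (monomial m (d c)) := by
  funext j
  change cD hd _ _ = _
  rw [Pi.single_apply, Pi.single_apply]
  split_ifs
  · rw [cD_monomial]
  · simp

theorem cB_smul {F : Type*} [Field F] {d : F → F} (hd : IsDerivation d) {k l : ℕ}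
    (f : F) (b : BT F k l) : cB hd k l (f • b) = d f • b + f • cB hd k l b := by
  funext i
  change cD hd _ (f • b i) = d f • b i + f • cD hd _ (b i)
  simp only [smul_eq_C_mul, cD_mul, cD_C]

theorem dB_eq {F : Type*} [Field F] {d : F → F} (hd : IsDerivation d) {k l : ℕ}
    (b : BT F k l) : dB hd k l b = mulB (X 0) b + cB hd k l b := rfl

theorem YB_mulB {F : Type*} [Field F] {k l D : ℕ} (a) (b : BT F k l) (hb : b ∈ YB F k l D) :
    mulB (X a) b ∈ YB F k l (D + 1) := by
  induction hb using Submodule.span_induction with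
  | mem x h =>
    obtain ⟨i, m, h, rfl⟩ := h
    rw [mulB_X_single]
    apply YB_single
    rw [map_add, Finsupp.degree_single]; omega
  | zero => rw [map_zero]; exact zero_mem _
  | add x y _ _ hx hy => rw [map_add]; exact add_mem hx hy
  | smul c x _ hx => rw [map_smul]; exact Submodule.smul_mem _ _ hx

theorem YB_cB {F : Type*} [Field F] {d : F → F} (hd : IsDerivation d) {k l D : ℕ}
    (b : BT F k l) (hb : b ∈ YB F k l D) : cB hd k l b ∈ YB F k l D := by
  induction hb using Submodule.span_induction with
  | mem x h =>
    obtain ⟨i, m, h, rfl⟩ := h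
    rw [cB_single]
    exact YB_single _ _ _ h
  | zero => rw [map_zero]; exact zero_mem _
  | add x y _ _ hx hy => rw [map_add]; exact add_mem hx hy
  | smul c x h hx =>
    rw [cB_smul]; exact add_mem (Submodule.smul_mem _ _ h) (Submodule.smul_mem _ _ hx)

theorem YB_dB {F : Type*} [Field F] {d : F → F} (hd : IsDerivation d) {k l D : ℕ}
    (b : BT F k l) (hb : b ∈ YB F k l D) : dB hd k l b ∈ YB F k l (D + 1) :=
  add_mem (YB_mulB 0 b hb) (YB_mono (Nat.le_succ D) (YB_cB hd b hb))

theorem actB_single {F : Type*} [Field F] {k l : ℕ} (σ : Equiv.Perm (Fin (k + 1)))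
    (i : Fin (k + 1) → Fin l) (m) (c : F) :
    actB σ (Pi.single i (monomial m c) : BT F k l)
      = Pi.single (i ∘ σ.symm) (monomial (Finsupp.mapDomain σ m) c) := by
  funext j
  rw [actB_apply, Pi.single_apply, Pi.single_apply]
  have : j ∘ σ = i ↔ j = i ∘ σ.symm := by
    constructor
    · rintro rfl; funext x; simp
    · rintro rfl; funext x; simp
  simp only [this]
  split_ifs
  · rw [rename_monomial]
  · simp

theorem YB_actB {F : Type*} [Field F] {k l D : ℕ} (σ : Equiv.Perm (Fin (k + 1))) (b : BT F k l)
    (hb : b ∈ YB F k l D) : actB σ b ∈ YB F k l D := by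
  induction hb using Submodule.span_induction with
  | mem x h =>
    obtain ⟨i, m, h, rfl⟩ := h
    rw [actB_single]
    apply YB_single
    rwa [Finsupp.degree_mapDomain]
  | zero => rw [map_zero]; exact zero_mem _
  | add x y _ _ hx hy => rw [map_add]; exact add_mem hx hy
  | smul c x _ hx => rw [map_smul]; exact Submodule.smul_mem _ _ hx

theorem dB_iter {F : Type*} [Field F] {d : F → F} (hd : IsDerivation d) {k l : ℕ}
    (i : Fin (k + 1) → Fin l) (c : F) (n : ℕ) :
    (dB hd k l)^[n] (Pi.single i (C c)) - Pi.single i (monomial (Finsupp.single 0 n) c)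
      ∈ YB F k l n := by
  induction n with
  | zero => simp
  | succ n ih =>
    have h := YB_dB hd _ ih
    rw [map_sub, dB_eq _ (Pi.single i _), mulB_X_single, cB_single, ← Finsupp.single_add,
      ← Function.iterate_succ_apply' (dB hd k l)] at h
    have h2 : (Pi.single i (monomial (Finsupp.single 0 n) (d c)) : BT F k l)
      ∈ YB F k l (n + 1) := YB_single _ _ _ (by rw [Finsupp.degree_single]; omega)
    have h3 := add_mem h h2
    convert h3 using 1
    abel

theorem iter_sum {A ι : Type*} [AddCommMonoid A] (f : A →+ A) (n : ℕ) (s : Finset ι) (g : ι → A) :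
    f^[n] (∑ i ∈ s, g i) = ∑ i ∈ s, f^[n] (g i) := by
  induction n with
  | zero => rfl
  | succ n ih => simp only [Function.iterate_succ_apply', ih, map_sum]

theorem RB_lead {F : Type*} [Field F] {d : F → F} (hd : IsDerivation d) {k l : ℕ} (N : ℕ)
    (K : Fin l → Fin l → ℕ → F) (i : Fin (k + 1) → Fin l) (j : Fin l) :
    RB hd N K i j - (-1 : ℤ) ^ N • ∑ i', Pi.single (Function.update i 0 i')
      (monomial (Finsupp.single 0 N) (K i' j N)) ∈ YB F k l N := by
  rw [RB, Finset.sum_range_succ, add_sub_assoc, ← smul_sub]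
  refine add_mem (sum_mem fun n hn => zsmul_mem ?_ _) (zsmul_mem ?_ _)
  · have hn : n < N := by simpa using hn
    rw [iter_sum]
    refine sum_mem fun i' _ => ?_
    have h := dB_iter hd (Function.update i 0 i') (K i' j n) n
    have h2 : (Pi.single (Function.update i 0 i') (monomial (Finsupp.single 0 n) (K i' j n))
      : BT F k l) ∈ YB F k l N := YB_single _ _ _ (by rw [Finsupp.degree_single]; omega)
    have h3 := add_mem (YB_mono hn.le h) h2
    rw [sub_add_cancel] at h3
    exact h3
  · rw [iter_sum, ← Finset.sum_sub_distrib]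
    exact sum_mem fun i' _ => dB_iter hd _ _ _

theorem red_base {F : Type*} [Field F] {d : F → F} (hd : IsDerivation d) {k l : ℕ} (N : ℕ)
    (K : Fin l → Fin l → ℕ → F) (hK : IsUnit (Matrix.of fun i j : Fin l => K i j N))
    (i : Fin (k + 1) → Fin l) :
    ∃ y ∈ YB F k l N, Pi.single i (monomial (Finsupp.single 0 N) 1) - y ∈ W0 hd k l N K := by
  obtain ⟨A, hA⟩ := hK.exists_right_inv
  have hlead : ∑ j, A j (i 0) • ∑ i', (Pi.single (Function.update i 0 i')
      (monomial (Finsupp.single 0 N) (K i' j N)) : BT F k l)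
      = Pi.single i (monomial (Finsupp.single 0 N) 1) := by
    simp only [single_smul_mono _ _ (K _ _ _), Finset.smul_sum, smul_smul]
    rw [Finset.sum_comm]
    simp only [← Finset.sum_smul]
    have : ∀ i', ∑ j, A j (i 0) * K i' j N = (1 : Matrix (Fin l) (Fin l) F) i' (i 0) := by
      intro i'
      rw [← hA, Matrix.mul_apply]
      simp [mul_comm]
    simp only [this, Matrix.one_apply, ite_smul, one_smul, zero_smul]
    simp
  have hy : ∑ j, A j (i 0) • ((-1 : ℤ) ^ N • RB hd N K i j
      - ∑ i', (Pi.single (Function.update i 0 i')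
      (monomial (Finsupp.single 0 N) (K i' j N)) : BT F k l)) ∈ YB F k l N := by
    refine sum_mem fun j _ => Submodule.smul_mem _ _ ?_
    have := zsmul_mem (RB_lead hd N K i j) ((-1 : ℤ) ^ N)
    rw [smul_sub, smul_smul, ← mul_pow] at this
    simpa using this
  refine ⟨_, neg_mem hy, ?_⟩
  simp only [smul_sub, Finset.sum_sub_distrib, hlead]
  have : ∑ j, A j (i 0) • ((-1 : ℤ) ^ N • RB hd N K i j) ∈ W0 hd k l N K :=
    sum_mem fun j _ => Submodule.smul_mem _ _ (zsmul_mem (RB_mem hd N K i j) _)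
  convert this using 1
  abel

theorem red_step {F : Type*} [Field F] {d : F → F} (hd : IsDerivation d) {k l : ℕ} (N : ℕ)
    (K : Fin l → Fin l → ℕ → F) (i : Fin (k + 1) → Fin l) (m a)
    (h : ∃ y ∈ YB F k l m.degree, Pi.single i (monomial m 1) - y ∈ W0 hd k l N K) :
    ∃ y ∈ YB F k l (m + Finsupp.single a 1).degree,
      Pi.single i (monomial (m + Finsupp.single a 1) 1) - y ∈ W0 hd k l N K := by
  obtain ⟨y, hy, hw⟩ := h
  rw [map_add, Finsupp.degree_single]
  induction a using Fin.cases with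
  | zero =>
    refine ⟨_, YB_dB hd y hy, ?_⟩
    have := W0_dB hd K _ hw
    rw [map_sub, dB_eq _ (Pi.single i _), mulB_X_single, cB_single, hd.d_one] at this
    simpa using this
  | succ a =>
    refine ⟨_, YB_mulB a.succ y hy, ?_⟩
    have := W0_mul hd K _ hw (X a)
    rwa [rename_X, map_sub, mulB_X_single] at this

theorem red_all {F : Type*} [Field F] {d : F → F} (hd : IsDerivation d) {k l : ℕ} (N : ℕ)
    (K : Fin l → Fin l → ℕ → F) (hK : IsUnit (Matrix.of fun i j : Fin l => K i j N))
    (i : Fin (k + 1) → Fin l) (m : Fin (k + 1) →₀ ℕ) (hm : N ≤ m 0) :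
    ∃ y ∈ YB F k l m.degree, Pi.single i (monomial m 1) - y ∈ W0 hd k l N K := by
  have key : ∀ m' m : Fin (k + 1) →₀ ℕ,
      (∃ y ∈ YB F k l m.degree, Pi.single i (monomial m 1) - y ∈ W0 hd k l N K) →
      (∃ y ∈ YB F k l (m + m').degree,
        Pi.single i (monomial (m + m') 1) - y ∈ W0 hd k l N K) := by
    intro m'
    induction m' using Finsupp.induction_linear with
    | zero => intro m h; simpa using h
    | add f g hf hg => intro m h; rw [← add_assoc]; exact hg _ (hf _ h)
    | single a n =>
      intro m h
      induction n with
      | zero => simpa using h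
      | succ n ih =>
        rw [Finsupp.single_add, ← add_assoc]
        exact red_step hd N K i _ a ih
  have h0 := red_base hd N K hK i
  have hle : Finsupp.single 0 N ≤ m := by simpa using hm
  obtain ⟨m', rfl⟩ := exists_add_of_le hle
  refine key m' _ ?_
  rwa [Finsupp.degree_single]

/-- sum of all translates of W₀ -/
noncomputable def WB {F : Type*} [Field F] {d : F → F} (hd : IsDerivation d) (k l N : ℕ)
    (K : Fin l → Fin l → ℕ → F) : Submodule F (BT F k l) :=
  ⨆ σ : Equiv.Perm (Fin (k + 1)), (W0 hd k l N K).map (actB σ)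

theorem WB_finite {F : Type*} [Field F] {d : F → F} (hd : IsDerivation d) {k l : ℕ} (N : ℕ)
    (K : Fin l → Fin l → ℕ → F) (hK : IsUnit (Matrix.of fun i j : Fin l => K i j N)) :
    Module.Finite F (BT F k l ⧸ WB hd k l N K) := by
  let g : (Fin (k + 1) → Fin l) × (Fin (k + 1) → Fin N) → BT F k l := fun p =>
    Pi.single p.1 (monomial (Finsupp.equivFunOnFinite.symm (fun a => (p.2 a : ℕ))) 1)
  set U := Submodule.span F (Set.range g) with hU
  have hfin : FiniteDimensional F U := FiniteDimensional.span_of_finite F (Set.finite_range g)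
  have hY : ∀ D, YB F k l D ≤ U ⊔ WB hd k l N K := by
    intro D
    induction D with
    | zero =>
      refine Submodule.span_le.2 ?_
      rintro b ⟨i, m, h, -⟩
      omega
    | succ D ih =>
      refine Submodule.span_le.2 ?_
      rintro b ⟨i, m, h, rfl⟩
      by_cases hm : ∀ a, m a < N
      · refine Submodule.mem_sup_left (Submodule.subset_span ⟨(i, fun a => ⟨m a, hm a⟩), ?_⟩)
        simp only [g]
        congr 2
        ext a; simp
      · push Not at hm
        obtain ⟨a, ha⟩ := hm
        set σ := Equiv.swap 0 a with hσ
        obtain ⟨y, hy, hw⟩ := red_all hd N K hK (i ∘ σ) (Finsupp.mapDomain σ m) (by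
          have h1 := Finsupp.mapDomain_apply σ.injective m a
          rw [hσ, Equiv.swap_apply_right] at h1
          rw [h1]; exact ha)
        have h2 : actB σ (Pi.single (i ∘ σ) (monomial (Finsupp.mapDomain σ m) 1) - y)
            ∈ WB hd k l N K := by
          refine Submodule.mem_iSup_of_mem σ ?_
          exact Submodule.mem_map_of_mem hw
        have h3 : (i ∘ σ) ∘ σ.symm = i := by funext x; simp
        have h4 : Finsupp.mapDomain σ (Finsupp.mapDomain σ m) = m := by
          rw [← Finsupp.mapDomain_comp]
          have : (σ ∘ σ : Fin (k + 1) → Fin (k + 1)) = id := by funext x; simp [hσ]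
          rw [this, Finsupp.mapDomain_id]
        rw [map_sub, actB_single, h3, h4] at h2
        rw [Finsupp.degree_mapDomain] at hy
        have h5 := ih (YB_mono (by omega) (YB_actB σ y hy))
        have h6 := add_mem (Submodule.mem_sup_right h2) h5
        rwa [sub_add_cancel] at h6
  have htop : ∀ b, b ∈ U ⊔ WB hd k l N K := by
    intro b
    rw [← Finset.univ_sum_single b]
    refine sum_mem fun i _ => ?_
    rw [(b i).as_sum]
    have : (Pi.single i (∑ v ∈ (b i).support, monomial v (coeff v (b i))) : BT F k l)
        = ∑ v ∈ (b i).support, Pi.single i (monomial v (coeff v (b i))) :=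
      map_sum (AddMonoidHom.single (fun _ => MvPolynomial (Fin (k + 1)) F) i) _ _
    rw [this]
    exact sum_mem fun m _ => hY _ (YB_single i m _ (Nat.lt_succ_self _))
  refine Module.Finite.of_surjective ((WB hd k l N K).mkQ.comp U.subtype) ?_
  intro x
  obtain ⟨b, rfl⟩ := Submodule.mkQ_surjective _ x
  obtain ⟨u, hu, w, hw, rfl⟩ := Submodule.mem_sup.1 (htop b)
  refine ⟨⟨u, hu⟩, ?_⟩
  have : (WB hd k l N K).mkQ w = 0 := by simpa using hw
  rw [map_add, this, add_zero]
  rfl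

/-- antisymmetrization -/
noncomputable def asum {F : Type*} [Field F] (k l : ℕ) : BT F k l →+ BT F k l :=
  ∑ σ : Equiv.Perm (Fin (k + 1)), (Equiv.Perm.sign σ : ℤ) • (actB σ).toAddMonoidHom

theorem asum_apply {F : Type*} [Field F] {k l : ℕ} (b : BT F k l) :
    asum k l b = ∑ σ : Equiv.Perm (Fin (k + 1)), (Equiv.Perm.sign σ : ℤ) • actB σ b := by
  simp [asum]

theorem asum_act {F : Type*} [Field F] {k l : ℕ} (τ : Equiv.Perm (Fin (k + 1))) (b : BT F k l) :
    asum k l (actB τ b) = (Equiv.Perm.sign τ : ℤ) • asum k l b := by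
  rw [asum_apply, asum_apply, Finset.smul_sum]
  rw [← Equiv.sum_comp (Equiv.mulRight τ)
    (fun σ => (Equiv.Perm.sign τ : ℤ) • ((Equiv.Perm.sign σ : ℤ) • actB σ b))]
  refine Finset.sum_congr rfl fun σ _ => ?_
  rw [Equiv.coe_mulRight, actB_mul, smul_smul, Equiv.Perm.sign_mul]
  congr 1
  rcases Int.units_eq_one_or (Equiv.Perm.sign τ) with h | h <;> simp [h]

theorem asum_WB {F : Type*} [Field F] {d : F → F} (hd : IsDerivation d) {k l N : ℕ}
    (K : Fin l → Fin l → ℕ → F) (w : BT F k l) (hw : w ∈ WB hd k l N K) :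
    ∃ w0 ∈ W0 hd k l N K, asum k l w = asum k l w0 := by
  refine Submodule.iSup_induction _ (motive := fun w => ∃ w0 ∈ W0 hd k l N K,
    asum k l w = asum k l w0) hw ?_ ?_ ?_
  · rintro σ x hx
    obtain ⟨y, hy, rfl⟩ := Submodule.mem_map.1 hx
    exact ⟨(Equiv.Perm.sign σ : ℤ) • y, zsmul_mem hy _, by rw [asum_act, map_zsmul]⟩
  · exact ⟨0, zero_mem _, rfl⟩
  · rintro x y ⟨a, ha, hxa⟩ ⟨b, hb, hyb⟩
    exact ⟨a + b, add_mem ha hb, by rw [map_add, map_add, hxa, hyb]⟩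

theorem eB_asum {F : Type*} [Field F] {d : F → F} (hd : IsDerivation d) {k l : ℕ} (b : BT F k l) :
    asum k l (eB hd k l b) = eB hd k l (asum k l b) := by
  simp only [asum_apply, map_sum, map_zsmul, eB_actB]

theorem piB_swap_sum {F : Type*} [Field F] {d : F → F} (hd : IsDerivation d) {k l : ℕ}
    (z : BT F k l) :
    ∑ p : Fin (k + 1), (Equiv.Perm.sign (Equiv.swap 0 p) : ℤ) •
      piB hd k l (actB (Equiv.swap 0 p) z)
      = piB hd k l z - ∑ α : Fin k, tauAct d α (piB hd k l z) := by
  rw [Fin.sum_univ_succ, sub_eq_add_neg, ← Finset.sum_neg_distrib]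
  congr 1
  · rw [Equiv.swap_self, Equiv.Perm.sign_refl, piB_act_iota]
    have : actB (Equiv.refl (Fin (k + 1))) (iotaB (piB hd k l z)) = iotaB (piB hd k l z) := by
      funext i
      rw [actB_apply]
      simp
    rw [this, piB_iotaB]
    simp
  · refine Finset.sum_congr rfl fun α _ => ?_
    rw [Equiv.Perm.sign_swap (Fin.succ_ne_zero α).symm, piB_act_iota, tauAct_eq hd]
    simp

theorem piB_asum {F : Type*} [Field F] {d : F → F} (hd : IsDerivation d) {k l : ℕ}
    (b : BT F k l) (z : HT F k l)
    (hz : z = ∑ e : Equiv.Perm (Fin k), (Equiv.Perm.sign e : ℤ) • actH e (piB hd k l b)) :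
    piB hd k l (asum k l b) = z - ∑ α : Fin k, tauAct d α z := by
  have hz2 : z = piB hd k l
      (∑ e : Equiv.Perm (Fin k), (Equiv.Perm.sign e : ℤ) • actB (extP e) b) := by
    simp only [hz, map_sum, map_zsmul, piB_actB]
  rw [hz2, ← piB_swap_sum, asum_apply, ← Equiv.sum_comp Equiv.Perm.decomposeFin.symm,
    Fintype.sum_prod_type, map_sum]
  refine Finset.sum_congr rfl fun p _ => ?_
  simp only [map_sum, map_zsmul, Finset.smul_sum, decomp_eq, Equiv.Perm.sign_mul, sign_extP,
    actB_mul, smul_smul, Units.val_mul]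

theorem skewSum {F : Type*} [Field F] {k l : ℕ} (P : HT F k l) (τ : Equiv.Perm (Fin k)) :
    actH τ (∑ e : Equiv.Perm (Fin k), (Equiv.Perm.sign e : ℤ) • actH e P)
      = (Equiv.Perm.sign τ : ℤ) • ∑ e : Equiv.Perm (Fin k), (Equiv.Perm.sign e : ℤ) • actH e P := by
  conv_rhs => rw [← Equiv.sum_comp (Equiv.mulLeft τ)
    (fun e => (Equiv.Perm.sign e : ℤ) • actH e P)]
  rw [map_sum, Finset.smul_sum]
  refine Finset.sum_congr rfl fun e _ => ?_
  rw [Equiv.coe_mulLeft, actH_mul, smul_smul, Equiv.Perm.sign_mul, map_zsmul]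
  congr 1
  rcases Int.units_eq_one_or (Equiv.Perm.sign τ) with h | h <;> simp [h]

theorem main_aux {F : Type*} [Field F] [CharZero F] {d : F → F} (hd : IsDerivation d)
    (hlc : LinearlyClosed d) (k l N : ℕ) (K : Fin l → Fin l → ℕ → F)
    (hK : IsUnit (Matrix.of fun i j : Fin l => K i j N)) (S : HT F k l)
    (hSskew : IsSkewsym S) (hStot : ∀ (α : Fin k) (i), tauAct d α S i = - S i) :
    ∃ P : HT F k l, IsSkewsym P ∧ totSkew d (kCirc d N K P) = S := by
  have := WB_finite hd (k := k) N K hK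
  obtain ⟨u, w, hw, hS⟩ := surj_mod hd hlc (eB hd k l) (eB_smul hd) (WB hd k l N K) (iotaB S)
  obtain ⟨w0, hw0, hww⟩ := asum_WB hd K w hw
  obtain ⟨P0, hP0⟩ := hw0 1
  have hP0' : piB hd k l w0 = kCH hd k l N K P0 := by
    rw [hP0]; congr 1; funext i; simp
  have hact : ∀ e : Equiv.Perm (Fin k), actH e S = (Equiv.Perm.sign e : ℤ) • S :=
    fun e => funext fun i => hSskew e i
  have h1 : piB hd k l (asum k l (iotaB S)) = ((k + 1) * k.factorial) • S := by
    rw [piB_asum hd _ (k.factorial • S)]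
    · have : ∀ α : Fin k, tauAct d α (k.factorial • S) = - (k.factorial • S) := by
        intro α
        have h2 : tauAct d α S = - S := funext (hStot α)
        rw [tauAct_eq hd] at h2 ⊢
        rw [map_nsmul, map_nsmul, map_nsmul, h2, smul_neg]
      simp only [this]
      rw [Finset.sum_const, Finset.card_univ, Fintype.card_fin, smul_neg, sub_neg_eq_add, smul_smul,
        ← add_smul]
      congr 1; ring
    · simp only [piB_iotaB, hact, smul_smul]
      have : ∀ e : Equiv.Perm (Fin k), (Equiv.Perm.sign e : ℤ) * (Equiv.Perm.sign e : ℤ) = 1 := by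
        intro e
        rcases Int.units_eq_one_or (Equiv.Perm.sign e) with h | h <;> simp [h]
      simp only [this, one_smul]
      rw [Finset.sum_const, Finset.card_univ, Fintype.card_perm, Fintype.card_fin]
  set P1 : HT F k l := ∑ e : Equiv.Perm (Fin k), (Equiv.Perm.sign e : ℤ) • actH e P0 with hP1
  have hfac : (k.factorial : F) ≠ 0 := by exact_mod_cast k.factorial_ne_zero
  have hk1 : (k : F) + 1 ≠ 0 := by exact_mod_cast k.succ_ne_zero
  set P : HT F k l := (k.factorial : F)⁻¹ • P1 with hP
  have hPP : P1 = k.factorial • P := by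
    rw [hP, ← Nat.cast_smul_eq_nsmul F, smul_smul, mul_inv_cancel₀ hfac, one_smul]
  have h2 : piB hd k l (asum k l (iotaB S)) = kCH hd k l N K P1
      - ∑ α : Fin k, tauAct d α (kCH hd k l N K P1) := by
    rw [hS, map_add, eB_asum, map_add, piB_eB, zero_add, hww]
    refine piB_asum hd w0 _ ?_
    simp only [hP1, map_sum, map_zsmul, kCH_actH, hP0']
  refine ⟨P, ?_, ?_⟩
  · intro σ i
    have h3 : actH σ P = (Equiv.Perm.sign σ : ℤ) • P := by
      rw [hP, map_smul, hP1, skewSum, smul_comm]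
    exact congrFun h3 i
  · have h4 : k.factorial • (kCH hd k l N K P - ∑ α : Fin k, tauAct d α (kCH hd k l N K P))
        = k.factorial • ((k + 1) • S) := by
      rw [smul_smul, mul_comm, ← h1, h2, hPP, smul_sub, Finset.smul_sum]
      simp only [tauAct_eq hd, map_nsmul]
    have h5 := smul_right_injective (HT F k l) (Nat.factorial_ne_zero k) h4
    funext i
    have h6 := congrFun h5 i
    rw [Pi.sub_apply, Finset.sum_apply] at h6
    change (((k : F) + 1)⁻¹) • (kCH hd k l N K P i - ∑ α : Fin k, tauAct d α (kCH hd k l N K P) i)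
      = S i
    rw [h6, Pi.smul_apply, ← Nat.cast_smul_eq_nsmul F, smul_smul]
    push_cast
    rw [inv_mul_cancel₀ hk1, one_smul]

end Aux

/-- Let `F` be a linearly closed differential field of characteristic zero and `K` an
`ℓ×ℓ` matrix differential operator of order `N` with invertible leading coefficient.
Then for every totally skewsymmetric `k`-differential operator `S` on `F^ℓ` there exists
a skewsymmetric `k`-differential operator `P` on `F^ℓ` with `⟨K∘P⟩⁻ = S`. -/
theorem stmt_10 (F : Type*) [Field F] [CharZero F] (d : F → F) (hd : IsDerivation d)
    (hlc : LinearlyClosed d)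
    (k l N : ℕ) (hl : 0 < l)
    (K : Fin l → Fin l → ℕ → F)
    (hK : IsUnit (Matrix.of fun i j : Fin l => K i j N))
    (S : (Fin (k + 1) → Fin l) → MvPolynomial (Fin k) F)
    (hSskew : IsSkewsym S)
    (hStot : ∀ (α : Fin k) (i : Fin (k + 1) → Fin l), tauAct d α S i = - S i) :
    ∃ P : (Fin (k + 1) → Fin l) → MvPolynomial (Fin k) F,
      IsSkewsym P ∧ totSkew d (kCirc d N K P) = S := by
  exact main_aux hd hlc k l N K hK S hSskew hStot
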